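/- Let d ≥ 2 and let F⁺_r = { diag(e^{r_1 t}, …, e^{r_d t}, e^{-t}) : t > 0 } ⊂ SL_{d+1}(ℝ) for a weight r ∈ R_d, and for x ∈ ℝ^d let u_x be the unipotent matrix with identity d×d block, last column (x, 1)ᵀ. Then x ∈ Bad(r) if and only if the orbit F⁺_r u_x SL_{d+1}(ℤ) is bounded in SL_{d+1}(ℝ)/SL_{d+1}(ℤ). -/

import Mathlib

/-- Topology on the special linear group, induced from the space of matrices. -/
noncomputable instance SLtop (m : ℕ) : TopologicalSpace (Matrix.SpecialLinearGroup (Fin m) ℝ) :=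
  inferInstanceAs (TopologicalSpace {A : Matrix (Fin m) (Fin m) ℝ // A.det = 1})

/-!
By Mahler's criterion, a set of lattices `A ℤⁿ` with `A ∈ SL_n(ℝ)` is relatively compact iff their
nonzero vectors are uniformly bounded away from `0`. If they are, Minkowski's theorem on linear
forms yields an integral matrix `W` such that `A W` has bounded entries and dominant diagonal. Then
`det W` is a bounded nonzero integer, and `SL_n(ℤ)` has finitely many orbits on the integral
matrices of a given nonzero determinant, so that `W⁻¹ γ`, and with it `A γ = (A W) (W⁻¹ γ)`, is
bounded for some `γ ∈ SL_n(ℤ)`.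

The lattice `g_t u_x ℤ^{d+1}` consists of the vectors
`(e^{r₁ t} (p₁ + x₁ q), …, e^{r_d t} (p_d + x_d q), e^{-t} q)`. If such a nonzero vector is short,
then `|q| < e^t`, so `|q|^{rᵢ} ‖q xᵢ‖` is at most the size of its `i`-th coordinate; conversely, a
good approximation with denominator `q` gives a short vector at a time `t` for which `e^t` is a
fixed multiple of `q`.
-/

section Lattices

open Matrix MeasureTheory Module Set
open scoped Matrix.Norms.Operator

variable {n : Type*} [Fintype n]

theorem le_pi_norm_iff_exists {E : Type*} [SeminormedAddCommGroup E] {y : n → E} {δ : ℝ}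
    (hδ : 0 < δ) : δ ≤ ‖y‖ ↔ ∃ i, δ ≤ ‖y i‖ := by
  rw [← not_lt, pi_norm_lt_iff hδ]
  simp only [not_forall, not_lt]

theorem one_le_norm_intCast_comp {w : n → ℤ} (hw : w ≠ 0) : 1 ≤ ‖(Int.cast ∘ w : n → ℝ)‖ := by
  obtain ⟨i, hi⟩ := Function.ne_iff.1 hw
  refine (le_pi_norm_iff_exists one_pos).2 ⟨i, ?_⟩
  rw [Function.comp_apply, Real.norm_eq_abs]
  exact mod_cast Int.one_le_abs hi

theorem linfty_opNorm_le_of_forall_norm_le {m E : Type*} [Fintype m] [SeminormedAddCommGroup E]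
    {A : Matrix m n E} {R : ℝ} (hR : 0 ≤ R) (h : ∀ i j, ‖A i j‖ ≤ R) :
    ‖A‖ ≤ Fintype.card n * R := by
  lift R to NNReal using hR
  rw [linfty_opNorm_def]
  norm_cast
  refine Finset.sup_le fun i _ => ?_
  calc ∑ j, ‖A i j‖₊ ≤ ∑ _j : n, R := Finset.sum_le_sum fun j _ => h i j
    _ = Fintype.card n * R := by simp

/-- The nonzero vectors of the lattice `A ℤⁿ` have sup norm at least `δ`. -/
def NoShortVector (A : Matrix n n ℝ) (δ : ℝ) : Prop :=
  ∀ v : n → ℤ, v ≠ 0 → δ ≤ ‖A *ᵥ (Int.cast ∘ v)‖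

variable [DecidableEq n]

theorem volume_toLin'_preimage_Icc_neg {A : Matrix n n ℝ} (hA : A.det ≠ 0) {τ : n → ℝ}
    (hτ : 0 ≤ τ) : volume (toLin' A ⁻¹' Icc (-τ) τ) =
      ENNReal.ofReal (|A.det|⁻¹ * (2 ^ Fintype.card n * ∏ i, τ i)) := by
  rw [Measure.addHaar_preimage_linearMap _ (by rwa [LinearMap.det_toLin']), LinearMap.det_toLin',
    Real.volume_Icc_pi, ← ENNReal.ofReal_prod_of_nonneg fun i _ => by simpa using hτ i,
    ← ENNReal.ofReal_mul (abs_nonneg _), abs_inv]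
  simp [← two_mul, Finset.prod_mul_distrib]

theorem exists_int_ne_zero_abs_mulVec_le {A : Matrix n n ℝ} (hA : A.det ≠ 0) {τ : n → ℝ}
    (hτ : 0 ≤ τ) (hdet : |A.det| < ∏ i, τ i) :
    ∃ v : n → ℤ, v ≠ 0 ∧ ∀ i, |(A *ᵥ (Int.cast ∘ v)) i| ≤ τ i := by
  let L := (Submodule.span ℤ (range (Pi.basisFun ℝ n))).toAddSubgroup
  have : Countable L := inferInstanceAs (Countable (Submodule.span ℤ (range (Pi.basisFun ℝ n))))
  have hsymm : ∀ y ∈ toLin' A ⁻¹' Icc (-τ) τ, -y ∈ toLin' A ⁻¹' Icc (-τ) τ := by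
    intro y hy
    rw [mem_preimage, map_neg]
    exact ⟨neg_le_neg hy.2, neg_le.1 hy.1⟩
  have hcovol : volume (ZSpan.fundamentalDomain (Pi.basisFun ℝ n)) = 1 := by
    simp [ZSpan.fundamentalDomain_pi_basisFun, volume_pi_pi]
  have hlarge : volume (ZSpan.fundamentalDomain (Pi.basisFun ℝ n)) * 2 ^ finrank ℝ (n → ℝ)
      < volume (toLin' A ⁻¹' Icc (-τ) τ) := by
    have h2 : (2 : ENNReal) ^ Fintype.card n = ENNReal.ofReal (2 ^ Fintype.card n) := by
      simp [ENNReal.ofReal_pow]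
    rw [hcovol, one_mul, finrank_fintype_fun_eq_card, volume_toLin'_preimage_Icc_neg hA hτ, h2,
      ENNReal.ofReal_lt_ofReal_iff_of_nonneg (by positivity), lt_inv_mul_iff₀ (abs_pos.2 hA),
      mul_comm]
    gcongr
  obtain ⟨⟨y, hyL⟩, hy0, hys⟩ := exists_ne_zero_mem_lattice_of_measure_mul_two_pow_lt_measure
    (L := L) (ZSpan.isAddFundamentalDomain (Pi.basisFun ℝ n) volume) hsymm
    ((convex_Icc _ _).linear_preimage _) hlarge
  choose v hv using ((Pi.basisFun ℝ n).mem_span_iff_repr_mem ℤ y).1 hyL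
  obtain rfl : Int.cast ∘ v = y := funext hv
  refine ⟨v, ?_, fun i => abs_le.2 ⟨hys.1 i, hys.2 i⟩⟩
  rintro rfl
  exact hy0 (Subtype.ext (funext fun _ => Int.cast_zero))

theorem NoShortVector.exists_int_abs_mulVec_le {A : Matrix n n ℝ} {δ η T : ℝ}
    (h : NoShortVector A δ) (hη : 0 < η) (hηδ : η < δ) (hA : A.det ≠ 0)
    (hdet : |A.det| < T * η ^ (Fintype.card n - 1)) (k : n) :
    ∃ v : n → ℤ, δ ≤ |(A *ᵥ (Int.cast ∘ v)) k| ∧ |(A *ᵥ (Int.cast ∘ v)) k| ≤ T ∧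
      ∀ i ≠ k, |(A *ᵥ (Int.cast ∘ v)) i| ≤ η := by
  have hT : 0 ≤ T :=
    (pos_of_mul_pos_left ((abs_pos.2 hA).trans hdet) (pow_nonneg hη.le _)).le
  obtain ⟨v, hv0, hv⟩ := exists_int_ne_zero_abs_mulVec_le hA
    (τ := Function.update (fun _ => η) k T)
    (fun i => by
      obtain rfl | hi := eq_or_ne i k
      · simpa
      · simpa [hi] using hη.le)
    (by simpa [Finset.prod_update_of_mem, Finset.card_sdiff_of_subset] using hdet)
  have hoff : ∀ i ≠ k, |(A *ᵥ (Int.cast ∘ v)) i| ≤ η := fun i hi => by simpa [hi] using hv i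
  obtain ⟨i, hi⟩ := (le_pi_norm_iff_exists (hη.trans hηδ)).1 (h v hv0)
  obtain rfl : i = k := by
    by_contra hik
    exact (hoff i hik).not_gt (hηδ.trans_le hi)
  exact ⟨v, hi, by simpa using hv i, hoff⟩

theorem det_ne_zero_of_card_mul_lt {B : Matrix n n ℝ} {δ η : ℝ} (hηδ : Fintype.card n * η < δ)
    (hdiag : ∀ k, δ ≤ |B k k|) (hoff : ∀ k, ∀ i ≠ k, |B i k| ≤ η) (hη : 0 ≤ η) : B.det ≠ 0 := by
  refine det_ne_zero_of_sum_col_lt_diag fun k => ?_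
  calc ∑ i ∈ Finset.univ.erase k, ‖B i k‖
      ≤ ∑ _i ∈ Finset.univ.erase k, η :=
        Finset.sum_le_sum fun i hi => hoff k i (Finset.ne_of_mem_erase hi)
    _ ≤ ∑ _i : n, η :=
        Finset.sum_le_sum_of_subset_of_nonneg (Finset.erase_subset _ _) fun _ _ _ => hη
    _ = Fintype.card n * η := by simp
    _ < ‖B k k‖ := hηδ.trans_le (hdiag k)

theorem exists_int_det_ne_zero_forall_abs_le {δ : ℝ} (hδ : 0 < δ) :
    ∃ R : ℝ, 0 ≤ R ∧ ∀ A : SpecialLinearGroup n ℝ, NoShortVector A.1 δ →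
      ∃ W : Matrix n n ℤ, W.det ≠ 0 ∧ ∀ i j, |(A.1 * W.map (Int.castRingHom ℝ)) i j| ≤ R := by
  let N : ℝ := Fintype.card n
  let η : ℝ := δ / (N + 1)
  let T : ℝ := 2 / η ^ (Fintype.card n - 1)
  have hη : 0 < η := by positivity
  have hT : 0 ≤ T := by positivity
  have hTη : 1 < T * η ^ (Fintype.card n - 1) := by
    rw [div_mul_cancel₀ _ (by positivity)]
    exact one_lt_two
  have hNη : N * η < δ := by
    rw [← mul_div_assoc, div_lt_iff₀ (by positivity)]
    linarith
  refine ⟨max T η, le_max_of_le_left hT, fun A hA => ?_⟩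
  have hAdet : A.1.det = 1 := A.2
  have hcol (k : n) := by
    have hN : 1 ≤ N := Nat.one_le_cast.2 (Fintype.card_pos_iff.2 ⟨k⟩)
    exact hA.exists_int_abs_mulVec_le hη (by nlinarith) (by simp [hAdet]) (by simpa [hAdet]) k
  choose v hdiag hdiag_le hoff using hcol
  let W : Matrix n n ℤ := of fun i j => v j i
  have hAW (i j : n) : (A.1 * W.map (Int.castRingHom ℝ)) i j = (A.1 *ᵥ (Int.cast ∘ v j)) i := rfl
  have hdom : (A.1 * W.map (Int.castRingHom ℝ)).det ≠ 0 :=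
    det_ne_zero_of_card_mul_lt hNη hdiag hoff hη.le
  refine ⟨W, fun hW => hdom ?_, fun i j => ?_⟩
  · rw [det_mul, ← RingHom.mapMatrix_apply, ← RingHom.map_det, hW, map_zero, mul_zero]
  · rw [hAW]
    obtain rfl | hij := eq_or_ne i j
    · exact (hdiag_le i).trans (le_max_left _ _)
    · exact (hoff j i hij).trans (le_max_right _ _)

theorem mem_orbit_of_forall_dvd_sub {R : Type*} [CommRing R] {D : R} (hD : D ∈ nonZeroDivisors R)
    {W H : FixedDetMatrix n R D} (h : ∀ i j, D ∣ W.1 i j - H.1 i j) :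
    W ∈ MulAction.orbit (SpecialLinearGroup n R) H := by
  choose N hN using h
  have hW : W.1 = (1 + of N * H.1.adjugate) * H.1 := by
    rw [add_mul, one_mul, Matrix.mul_assoc, adjugate_mul, H.2, Matrix.mul_smul, Matrix.mul_one,
      ← sub_eq_iff_eq_add']
    exact Matrix.ext hN
  have hdet : (1 + of N * H.1.adjugate).det = 1 := by
    have := congrArg det hW
    rw [det_mul, W.2, H.2] at this
    exact mul_cancel_right_mem_nonZeroDivisors hD |>.1 (by rw [← this, one_mul])
  exact ⟨⟨_, hdet⟩, Subtype.ext hW.symm⟩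

theorem finite_orbits_fixedDetMatrix {R : Type*} [CommRing R] {D : R} (hD : D ∈ nonZeroDivisors R)
    [Finite (R ⧸ Ideal.span {D})] :
    Finite (MulAction.orbitRel.Quotient (SpecialLinearGroup n R) (FixedDetMatrix n R D)) := by
  have : Finite (Matrix n n (R ⧸ Ideal.span {D})) := inferInstanceAs (Finite (n → n → _))
  refine Finite.of_injective (fun q => q.out.1.map (Ideal.Quotient.mk (Ideal.span {D}))) ?_
  intro q q' h
  rw [← Quotient.out_equiv_out]
  refine mem_orbit_of_forall_dvd_sub hD fun i j => ?_
  rw [← Ideal.mem_span_singleton, ← Ideal.Quotient.eq]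
  exact congrFun (congrFun h i) j

theorem exists_norm_inv_mul_map_le {D : ℤ} (hD : D ≠ 0) :
    ∃ C, ∀ W : Matrix n n ℤ, W.det = D → ∃ γ : SpecialLinearGroup n ℤ,
      ‖(W.map (Int.castRingHom ℝ))⁻¹ * γ.1.map (Int.castRingHom ℝ)‖ ≤ C := by
  have : NeZero D.natAbs := ⟨Int.natAbs_ne_zero.2 hD⟩
  have : Finite (ℤ ⧸ Ideal.span {D}) := .of_equiv _ (Int.quotientSpanEquivZMod D).symm.toEquiv
  have := finite_orbits_fixedDetMatrix (n := n) (mem_nonZeroDivisors_of_ne_zero hD)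
  let S := MulAction.orbitRel (SpecialLinearGroup n ℤ) (FixedDetMatrix n ℤ D)
  obtain ⟨C, hC⟩ := (finite_range fun q : Quotient S =>
    ‖(q.out.1.map (Int.castRingHom ℝ))⁻¹‖).bddAbove
  refine ⟨C, fun W hW => ?_⟩
  let q : Quotient S := Quotient.mk S ⟨W, hW⟩
  obtain ⟨γ, hγ⟩ : S ⟨W, hW⟩ q.out := S.symm (Quotient.mk_out _)
  have hWγ : W = γ.1 * q.out.1 := (congrArg Subtype.val hγ).symm
  have hγdet : IsUnit (γ.1.map (Int.castRingHom ℝ)).det :=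
    (SpecialLinearGroup.map (Int.castRingHom ℝ) γ).2 ▸ isUnit_one
  have hinv : (W.map (Int.castRingHom ℝ))⁻¹ * γ.1.map (Int.castRingHom ℝ) =
      (q.out.1.map (Int.castRingHom ℝ))⁻¹ := by
    rw [congrArg (·.map (Int.castRingHom ℝ)) hWγ, Matrix.map_mul, Matrix.mul_inv_rev,
      nonsing_inv_mul_cancel_right _ _ hγdet]
  exact ⟨γ, hinv ▸ hC ⟨q, rfl⟩⟩

theorem exists_norm_mul_map_le {δ : ℝ} (hδ : 0 < δ) :
    ∃ C, ∀ A : SpecialLinearGroup n ℝ, NoShortVector A.1 δ →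
      ∃ γ : SpecialLinearGroup n ℤ, ‖(A * SpecialLinearGroup.map (Int.castRingHom ℝ) γ).1‖ ≤ C := by
  obtain ⟨R, hR, hW⟩ := exists_int_det_ne_zero_forall_abs_le (n := n) hδ
  choose! C hC using fun D : ℤ => exists_norm_inv_mul_map_le (n := n) (D := D)
  let M : ℤ := ⌊(Fintype.card n).factorial • R ^ Fintype.card n⌋
  obtain ⟨B, hB⟩ := ((finite_Icc (-M) M).image C).bddAbove
  refine ⟨Fintype.card n * R * B, fun A hA => ?_⟩
  obtain ⟨W, hW0, hWR⟩ := hW A hA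
  have hdet : (A.1 * W.map (Int.castRingHom ℝ)).det = W.det := by
    rw [det_mul, A.2, one_mul]
    exact (Int.cast_det W).symm
  have hdetM : |W.det| ≤ M := by
    rw [Int.le_floor, Int.cast_abs, ← hdet]
    exact det_le (abv := AbsoluteValue.abs) hWR
  obtain ⟨γ, hγ⟩ := hC W.det hW0 W rfl
  refine ⟨γ, ?_⟩
  have hfactor : (A * SpecialLinearGroup.map (Int.castRingHom ℝ) γ).1 =
      A.1 * W.map (Int.castRingHom ℝ) *
        ((W.map (Int.castRingHom ℝ))⁻¹ * γ.1.map (Int.castRingHom ℝ)) := by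
    have hWunit : IsUnit (W.map (Int.castRingHom ℝ)).det :=
      isUnit_iff_ne_zero.2 <| (Int.cast_det W).symm.trans_ne (Int.cast_ne_zero.2 hW0)
    rw [Matrix.mul_assoc, mul_nonsing_inv_cancel_left _ _ hWunit]
    rfl
  rw [hfactor]
  calc _ ≤ _ := norm_mul_le _ _
    _ ≤ Fintype.card n * R * B := by
      gcongr
      · exact linfty_opNorm_le_of_forall_norm_le hR hWR
      · exact hγ.trans (hB ⟨W.det, abs_le.1 hdetM, rfl⟩)

end Lattices

theorem exists_subset_image_preimage_Iio {X Y α : Type*} [TopologicalSpace X]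
    [TopologicalSpace Y] [LinearOrder α] [TopologicalSpace α] [ClosedIciTopology α] [NoMaxOrder α]
    [Nonempty α] {f : X → Y} (hf : IsOpenQuotientMap f) {φ : X → α} (hφ : Continuous φ) {K : Set Y}
    (hK : IsCompact K) : ∃ c, K ⊆ f '' (φ ⁻¹' Set.Iio c) := by
  refine hK.elim_directed_cover _ (fun c => hf.isOpenMap _ (isOpen_Iio.preimage hφ)) ?_
    (Monotone.directed_le fun c c' h => Set.image_mono (Set.preimage_mono (Set.Iio_subset_Iio h)))
  intro y _
  obtain ⟨x, rfl⟩ := hf.surjective y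
  obtain ⟨c, hc⟩ := exists_gt (φ x)
  exact Set.mem_iUnion.2 ⟨c, x, hc, rfl⟩

section Mahler

open Matrix Set
open scoped Matrix.Norms.Operator

variable {n : Type*} [Fintype n] [DecidableEq n]

variable (n) in
/-- The lattice `SL_n(ℤ)` in `SL_n(ℝ)`. -/
abbrev integralSubgroup : Subgroup (SpecialLinearGroup n ℝ) :=
  (SpecialLinearGroup.map (Int.castRingHom ℝ)).range

theorem isClosed_integralSubgroup : IsClosed (integralSubgroup n : Set (SpecialLinearGroup n ℝ)) :=
  (Int.isClosedEmbedding_coe_real.specialLinearGroup_map (f := Int.castRingHom ℝ)).isClosed_range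

theorem isCompact_setOf_norm_specialLinearGroup_le (C : ℝ) :
    IsCompact {A : SpecialLinearGroup n ℝ | ‖A.1‖ ≤ C} := by
  have : ProperSpace (Matrix n n ℝ) := FiniteDimensional.proper ℝ _
  have h := (SpecialLinearGroup.isClosedEmbedding_val (n := n) (R := ℝ)).isCompact_preimage
    (isCompact_closedBall (0 : Matrix n n ℝ) C)
  simp_rw [← mem_closedBall_zero_iff]
  exact h

theorem noShortVector_of_norm_inv_le {A B : SpecialLinearGroup n ℝ}
    (hBA : B⁻¹ * A ∈ integralSubgroup n) {c : ℝ} (hc : 0 < c) (hB : ‖(B⁻¹).1‖ ≤ c) :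
    NoShortVector A.1 c⁻¹ := by
  intro v hv
  obtain ⟨γ, hγ⟩ := hBA
  have hγv : γ.1 *ᵥ v ≠ 0 :=
    fun h => hv (eq_zero_of_mulVec_eq_zero (γ.2.trans_ne one_ne_zero) h)
  have hγA : Int.cast ∘ (γ.1 *ᵥ v) = (B⁻¹).1 *ᵥ (A.1 *ᵥ (Int.cast ∘ v)) := by
    have hBAγ : (B⁻¹).1 * A.1 = γ.1.map (Int.castRingHom ℝ) := (congrArg Subtype.val hγ).symm
    rw [mulVec_mulVec, hBAγ]
    exact funext fun i => RingHom.map_mulVec (Int.castRingHom ℝ) γ.1 v i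
  rw [inv_le_iff_one_le_mul₀' hc]
  calc (1 : ℝ) ≤ ‖(B⁻¹).1 *ᵥ (A.1 *ᵥ (Int.cast ∘ v))‖ := hγA ▸ one_le_norm_intCast_comp hγv
    _ ≤ ‖(B⁻¹).1‖ * ‖A.1 *ᵥ (Int.cast ∘ v)‖ := linfty_opNorm_mulVec _ _
    _ ≤ c * ‖A.1 *ᵥ (Int.cast ∘ v)‖ := by gcongr

theorem isCompact_closure_image_mk_iff_noShortVector (T : Set (SpecialLinearGroup n ℝ)) :
    IsCompact (closure ((QuotientGroup.mk : _ → _ ⧸ integralSubgroup n) '' T)) ↔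
      ∃ δ > 0, ∀ A ∈ T, NoShortVector A.1 δ := by
  constructor
  · intro hK
    obtain ⟨c, hc⟩ := exists_subset_image_preimage_Iio
      QuotientGroup.isOpenQuotientMap_mk
      ((continuous_norm.comp continuous_subtype_val).comp
        (continuous_inv (G := SpecialLinearGroup n ℝ))) hK
    refine ⟨(max c 1)⁻¹, by positivity, fun A hA => ?_⟩
    obtain ⟨B, hB, hBA⟩ := hc (subset_closure (mem_image_of_mem _ hA))
    exact noShortVector_of_norm_inv_le (QuotientGroup.eq.1 hBA) (by positivity)
      (le_max_of_le_left (le_of_lt hB))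
  · rintro ⟨δ, hδ, hT⟩
    obtain ⟨C, hC⟩ := exists_norm_mul_map_le (n := n) hδ
    have := isClosed_integralSubgroup (n := n)
    refine ((isCompact_setOf_norm_specialLinearGroup_le C).image
      QuotientGroup.continuous_mk).closure_of_subset ?_
    rintro _ ⟨A, hA, rfl⟩
    obtain ⟨γ, hγ⟩ := hC A (hT A hA)
    exact ⟨_, hγ, QuotientGroup.mk_mul_of_mem A ⟨γ, rfl⟩⟩

end Mahler

section BadlyApproximable

/-- The set `Bad(r)` of vectors badly approximable with weights `r`: the requirement that the
maximum over `i` of `q ^ rᵢ ‖q xᵢ‖` be at least `ε` is stated as the existence of such an `i`. -/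
def badlyApproximable {ι : Type*} (r : ι → ℝ) : Set (ι → ℝ) :=
  {x | ∃ ε : ℝ, 0 < ε ∧ ∀ q : ℕ, 0 < q →
    ∃ i, ε ≤ (q : ℝ) ^ r i * |(q : ℝ) * x i - round ((q : ℝ) * x i)|}

theorem abs_natAbs_mul_sub_round_le (y : ℝ) (p q : ℤ) :
    |(q.natAbs : ℝ) * y - round ((q.natAbs : ℝ) * y)| ≤ |p + y * q| := by
  rw [Nat.cast_natAbs, Int.cast_abs]
  obtain h | h := abs_choice (q : ℝ) <;> rw [h]
  · refine (round_le _ (-p)).trans_eq (congrArg _ ?_)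
    push_cast
    ring
  · refine (round_le _ p).trans_eq ?_
    rw [← abs_neg]
    ring_nf

variable {ι : Type*} {r x : ι → ℝ}

theorem exists_le_exp_mul_abs_of_forall_le {ε : ℝ} (hr : ∀ i, 0 ≤ r i)
    (hx : ∀ q : ℕ, 0 < q →
      ∃ i, ε ≤ (q : ℝ) ^ r i * |(q : ℝ) * x i - round ((q : ℝ) * x i)|)
    {t : ℝ} (ht : 0 < t) {p : ι → ℤ} {q : ℤ} (hpq : (p, q) ≠ 0) :
    (∃ i, min 1 ε ≤ Real.exp (r i * t) * |p i + x i * q|) ∨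
      min 1 ε ≤ Real.exp (-t) * |(q : ℝ)| := by
  obtain rfl | hq := eq_or_ne q 0
  · obtain ⟨i, hi⟩ := Function.ne_iff.1 fun hp => hpq (Prod.ext hp rfl)
    refine .inl ⟨i, (min_le_left _ _).trans ?_⟩
    have hp : (1 : ℝ) ≤ |(p i : ℝ)| := mod_cast Int.one_le_abs hi
    simpa using one_le_mul_of_one_le_of_one_le (Real.one_le_exp (mul_nonneg (hr i) ht.le)) hp
  obtain hqt | hqt := le_total |(q : ℝ)| (Real.exp t)
  · obtain ⟨i, hi⟩ := hx q.natAbs (Int.natAbs_pos.2 hq)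
    refine .inl ⟨i, (min_le_right _ _).trans (hi.trans ?_)⟩
    have hpow : (q.natAbs : ℝ) ^ r i ≤ Real.exp (r i * t) := by
      rw [Nat.cast_natAbs, Int.cast_abs, mul_comm, Real.exp_mul]
      exact Real.rpow_le_rpow (abs_nonneg _) hqt (hr i)
    exact mul_le_mul hpow (abs_natAbs_mul_sub_round_le _ _ _) (abs_nonneg _) (Real.exp_pos _).le
  · refine .inr ((min_le_left _ _).trans ?_)
    rwa [Real.exp_neg, ← div_eq_inv_mul, one_le_div (Real.exp_pos t)]

-- At the time `t` with `exp t = c * q` the last coordinate `exp (-t) * q` is `c⁻¹ < δ`.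
theorem exists_le_rpow_mul_abs_sub_round_of_forall_le {δ : ℝ} (hδ : 0 < δ) (hr : ∀ i, r i ≤ 1)
    (hx : ∀ t : ℝ, 0 < t → ∀ (p : ι → ℤ) (q : ℤ), (p, q) ≠ 0 →
      (∃ i, δ ≤ Real.exp (r i * t) * |p i + x i * q|) ∨ δ ≤ Real.exp (-t) * |(q : ℝ)|)
    {q : ℕ} (hq : 0 < q) :
    ∃ i, δ / (1 + δ⁻¹) ≤ (q : ℝ) ^ r i * |(q : ℝ) * x i - round ((q : ℝ) * x i)| := by
  let c : ℝ := 1 + δ⁻¹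
  have hc : 1 < c := lt_add_of_pos_right 1 (inv_pos.2 hδ)
  have hc0 : 0 < c := one_pos.trans hc
  have hcδ : c⁻¹ < δ := inv_lt_of_inv_lt₀ hδ (lt_one_add _)
  have hq1 : (1 : ℝ) ≤ q := Nat.one_le_cast.2 hq
  have hexp : Real.exp (Real.log (c * q)) = c * q := Real.exp_log (by positivity)
  obtain ⟨i, hi⟩ | hlast := hx (Real.log (c * q)) (Real.log_pos (by nlinarith))
    (fun i => -round ((q : ℝ) * x i)) q (by simp [hq.ne'])
  · refine ⟨i, (div_le_iff₀' hc0).2 (hi.trans ?_)⟩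
    have hdist : |((-round ((q : ℝ) * x i) : ℤ) : ℝ) + x i * (q : ℤ)| =
        |(q : ℝ) * x i - round ((q : ℝ) * x i)| := by
      push_cast
      ring_nf
    have hci : c ^ r i ≤ c := Real.rpow_le_self_of_one_le hc.le (hr i)
    rw [hdist, mul_comm (r i), Real.exp_mul, hexp, Real.mul_rpow hc0.le q.cast_nonneg, mul_assoc]
    gcongr
  · refine absurd hlast (not_le.2 ?_)
    rw [Real.exp_neg, hexp, Int.cast_natCast, Nat.abs_cast, mul_inv,
      inv_mul_cancel_right₀ (by positivity)]
    exact hcδ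

theorem mem_badlyApproximable_iff (hr : ∀ i, r i ∈ Set.Icc 0 1) :
    x ∈ badlyApproximable r ↔ ∃ δ > 0, ∀ t : ℝ, 0 < t → ∀ (p : ι → ℤ) (q : ℤ), (p, q) ≠ 0 →
      (∃ i, δ ≤ Real.exp (r i * t) * |p i + x i * q|) ∨ δ ≤ Real.exp (-t) * |(q : ℝ)| := by
  constructor
  · rintro ⟨ε, hε, h⟩
    exact ⟨min 1 ε, lt_min one_pos hε, fun t ht p q hpq =>
      exists_le_exp_mul_abs_of_forall_le (fun i => (hr i).1) h ht hpq⟩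
  · rintro ⟨δ, hδ, h⟩
    exact ⟨δ / (1 + δ⁻¹), by positivity, fun q hq =>
      exists_le_rpow_mul_abs_sub_round_of_forall_le hδ (fun i => (hr i).2) h hq⟩

end BadlyApproximable

section Correspondence

open Matrix

variable {d : ℕ} {r x : Fin d → ℝ}

/-- The element `diag(exp (r₁ t), …, exp (r_d t), exp (-t))` of the semigroup `F⁺_r`. -/
noncomputable def weightedFlow (r : Fin d → ℝ) (t : ℝ) : Matrix (Fin (d + 1)) (Fin (d + 1)) ℝ :=
  diagonal (Fin.snoc (fun i => Real.exp (r i * t)) (Real.exp (-t)))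

/-- The matrix `u_x`: the identity with last column replaced by `(x, 1)ᵀ`. -/
def unipotent (x : Fin d → ℝ) : Matrix (Fin (d + 1)) (Fin (d + 1)) ℝ :=
  updateCol 1 (Fin.last d) (Fin.snoc x 1)

theorem unipotent_apply (i j : Fin (d + 1)) :
    unipotent x i j = if h : (i : ℕ) < d ∧ (j : ℕ) = d then x ⟨i, h.1⟩
      else if i = j then 1 else 0 := by
  cases i using Fin.lastCases <;> cases j using Fin.lastCases <;>
    simp [unipotent, one_apply, fun k : Fin d => k.2.ne]

theorem weightedFlow_mul_unipotent_mulVec (t : ℝ) (p : Fin d → ℝ) (q : ℝ) :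
    (weightedFlow r t * unipotent x) *ᵥ Fin.snoc p q =
      Fin.snoc (fun i => Real.exp (r i * t) * (p i + x i * q)) (Real.exp (-t) * q) := by
  rw [← mulVec_mulVec]
  ext i
  rw [weightedFlow, mulVec_diagonal]
  refine Fin.lastCases ?_ (fun i => ?_) i <;>
    simp [unipotent, mulVec, dotProduct, Fin.sum_univ_castSucc, updateCol_apply, one_apply,
      (Fin.castSucc_ne_last _).symm]

theorem noShortVector_weightedFlow_mul_unipotent_iff {δ : ℝ} (hδ : 0 < δ) (t : ℝ) :
    NoShortVector (weightedFlow r t * unipotent x) δ ↔ ∀ (p : Fin d → ℤ) (q : ℤ), (p, q) ≠ 0 →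
      (∃ i, δ ≤ Real.exp (r i * t) * |p i + x i * q|) ∨ δ ≤ Real.exp (-t) * |(q : ℝ)| := by
  have hsnoc (p : Fin d → ℤ) (q : ℤ) : (Fin.snoc p q : Fin (d + 1) → ℤ) ≠ 0 ↔ (p, q) ≠ 0 :=
    not_congr (by simp [funext_iff, Fin.forall_fin_succ'])
  rw [NoShortVector, ← (Fin.snocEquiv fun _ => ℤ).forall_congr_right, Prod.forall, forall_comm]
  refine forall₂_congr fun p q => imp_congr (hsnoc p q) ?_
  change _ ≤ ‖_ *ᵥ (Int.cast ∘ Fin.snoc p q)‖ ↔ _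
  rw [Fin.comp_snoc, weightedFlow_mul_unipotent_mulVec, le_pi_norm_iff_exists hδ,
    Fin.exists_fin_succ']
  simp

theorem stmt_16_general (hr : r ∈ stdSimplex ℝ (Fin d))
    {g : ℝ → SpecialLinearGroup (Fin (d + 1)) ℝ} (hg : ∀ t, (g t).1 = weightedFlow r t)
    {u : SpecialLinearGroup (Fin (d + 1)) ℝ} (hu : u.1 = unipotent x) :
    x ∈ badlyApproximable r ↔ IsCompact (closure {y : _ ⧸ integralSubgroup (Fin (d + 1)) |
      ∃ t : ℝ, 0 < t ∧ y = QuotientGroup.mk (g t * u)}) := by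
  have horbit : {y : _ ⧸ integralSubgroup (Fin (d + 1)) |
      ∃ t : ℝ, 0 < t ∧ y = QuotientGroup.mk (g t * u)} =
      QuotientGroup.mk '' ((fun t => g t * u) '' Set.Ioi 0) := by
    ext y
    simp [eq_comm]
  have hmahler := isCompact_closure_image_mk_iff_noShortVector ((fun t => g t * u) '' Set.Ioi 0)
  rw [horbit]
  refine Iff.trans ?_ hmahler.symm
  rw [mem_badlyApproximable_iff fun i => mem_Icc_of_mem_stdSimplex hr i]
  refine exists_congr fun δ => and_congr_right fun hδ => ?_
  rw [Set.forall_mem_image]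
  refine forall₂_congr fun t _ => ?_
  rw [← noShortVector_weightedFlow_mul_unipotent_iff hδ, ← hg, ← hu]
  rfl

end Correspondence

/-- Dani–Kleinbock correspondence: `x ∈ Bad(r)` iff the orbit `F_r⁺ u_x ℤ` is bounded
(i.e. has compact closure) in `SL_{d+1}(ℝ)/SL_{d+1}(ℤ)`. -/
theorem stmt_16 (d : ℕ) (hd : 2 ≤ d) (r : Fin d → ℝ) (hr : ∀ i, 0 ≤ r i)
    (hsum : ∑ i, r i = 1) (x : Fin d → ℝ)
    (g : ℝ → Matrix.SpecialLinearGroup (Fin (d + 1)) ℝ)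
    (hg : ∀ t : ℝ, (g t : Matrix (Fin (d + 1)) (Fin (d + 1)) ℝ) =
      Matrix.diagonal (fun i : Fin (d + 1) => if h : (i : ℕ) < d then Real.exp (r ⟨i, h⟩ * t)
        else Real.exp (-t)))
    (u : Matrix.SpecialLinearGroup (Fin (d + 1)) ℝ)
    (hu : ∀ i j : Fin (d + 1), (u : Matrix (Fin (d + 1)) (Fin (d + 1)) ℝ) i j =
      if h : (i : ℕ) < d ∧ (j : ℕ) = d then x ⟨i, h.1⟩ else if i = j then 1 else 0)
    (Γ : Subgroup (Matrix.SpecialLinearGroup (Fin (d + 1)) ℝ))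
    (hΓ : Γ = (Matrix.SpecialLinearGroup.map (n := Fin (d + 1)) (Int.castRingHom ℝ)).range) :
    (∃ ε : ℝ, 0 < ε ∧ ∀ q : ℕ, 0 < q →
        ∃ i, ε ≤ (q : ℝ) ^ (r i) * |(q : ℝ) * x i - round ((q : ℝ) * x i)|) ↔
      IsCompact (closure {y : Matrix.SpecialLinearGroup (Fin (d + 1)) ℝ ⧸ Γ |
        ∃ t : ℝ, 0 < t ∧ y = QuotientGroup.mk (g t * u)}) :=
  hΓ ▸ stmt_16_general ⟨hr, hsum⟩ hg
    (Matrix.ext fun i j => (hu i j).trans (unipotent_apply i j).symm)
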